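/- Let n, m be integers with 2 ≤ n < |m| and let G be the subgroup of BS(n,m) generated by a and b⁻¹ab. Then for every element γ of BS(n,m) that does not belong to the set {a^{nk} : k ∈ ℤ}, the set of conjugates {g γ g⁻¹ : g ∈ G} is infinite. -/

import Mathlib

/-- The single relator `b a^n b⁻¹ a^{-m}` of the Baumslag–Solitar group `BS(n,m)`. -/
def BSRels (n m : ℤ) : Set (FreeGroup Bool) :=
  {FreeGroup.of true * FreeGroup.of false ^ n * (FreeGroup.of true)⁻¹ *
    FreeGroup.of false ^ (-m)}

/-- The Baumslag–Solitar group `BS(n,m) = ⟨a, b ∣ b a^n b⁻¹ = a^m⟩`. -/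
abbrev BS (n m : ℤ) := PresentedGroup (BSRels n m)

/-- The canonical generator `a` of `BS(n,m)`. -/
def BS.a (n m : ℤ) : BS n m := PresentedGroup.of false

/-- The canonical generator `b` of `BS(n,m)`. -/
def BS.b (n m : ℤ) : BS n m := PresentedGroup.of true

namespace BSProof

open HNNExtension HNNExtension.NormalWord Multiplicative

/-- The subgroup `kℤ`. -/
def S (k : ℤ) : Subgroup (Multiplicative ℤ) := (zpowGroupHom (α := Multiplicative ℤ) k).range

theorem mem_S (k : ℤ) (x : Multiplicative ℤ) : x ∈ S k ↔ k ∣ toAdd x := by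
  constructor
  · rintro ⟨y, rfl⟩
    exact ⟨toAdd y, by simp [toAdd_zpow]⟩
  · rintro ⟨c, hc⟩
    exact ⟨ofAdd c, by
      apply toAdd.injective
      simp [toAdd_zpow, hc]⟩

theorem zpow_inj (k : ℤ) (hk : k ≠ 0) :
    Function.Injective (zpowGroupHom (α := Multiplicative ℤ) k) := by
  intro x y h
  have h' := congrArg toAdd h
  simp [toAdd_zpow, hk] at h'
  exact h'

/-- The isomorphism `nℤ ≃ mℤ`. -/
noncomputable def phi (n m : ℤ) (hn : n ≠ 0) (hm : m ≠ 0) : S n ≃* S m :=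
  (MonoidHom.ofInjective (zpow_inj n hn)).symm.trans (MonoidHom.ofInjective (zpow_inj m hm))

theorem phi_apply (n m : ℤ) (hn : n ≠ 0) (hm : m ≠ 0) (y : Multiplicative ℤ)
    (h : y ^ n ∈ S n) : (phi n m hn hm ⟨y ^ n, h⟩ : Multiplicative ℤ) = y ^ m := by
  have : (⟨y ^ n, h⟩ : S n) = MonoidHom.ofInjective (zpow_inj n hn) y := by
    ext; rfl
  rw [this]
  change ((MonoidHom.ofInjective (zpow_inj m hm)) ((MonoidHom.ofInjective (zpow_inj n hn)).symm
    (MonoidHom.ofInjective (zpow_inj n hn) y)) : Multiplicative ℤ) = y ^ m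
  rw [MulEquiv.symm_apply_apply]
  rfl

section
variable (n m : ℤ) (hn : n ≠ 0) (hm : m ≠ 0)

/-- The HNN extension isomorphic to `BS(n,m)`. -/
abbrev H := HNNExtension (Multiplicative ℤ) (S n) (S m) (phi n m hn hm)

/-- The powers of the base generator. -/
noncomputable def al (k : ℤ) : H n m hn hm := HNNExtension.of (ofAdd k)

/-- The stable letter. -/
noncomputable def T : H n m hn hm := HNNExtension.t

theorem al_add (j k : ℤ) : al n m hn hm (j + k) = al n m hn hm j * al n m hn hm k := by
  simp [al]

theorem al_neg (k : ℤ) : al n m hn hm (-k) = (al n m hn hm k)⁻¹ := by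
  simp [al]

theorem al_zero : al n m hn hm 0 = 1 := by
  simp [al]

theorem al_zpow (j k : ℤ) : al n m hn hm j ^ k = al n m hn hm (k * j) := by
  simp only [al, ← map_zpow, ← ofAdd_zsmul, smul_eq_mul]

/-- The product of a list of syllables. -/
noncomputable def P (L : List (ℤˣ × Multiplicative ℤ)) : H n m hn hm :=
  (L.map (fun x => HNNExtension.t ^ (x.1 : ℤ) * HNNExtension.of x.2)).prod

theorem P_nil : P n m hn hm [] = 1 := rfl

theorem P_append (L M : List (ℤˣ × Multiplicative ℤ)) :
    P n m hn hm (L ++ M) = P n m hn hm L * P n m hn hm M := by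
  simp [P]

theorem P_cons (u : ℤˣ) (k : Multiplicative ℤ) (M : List (ℤˣ × Multiplicative ℤ)) :
    P n m hn hm ((u, k) :: M) =
      T n m hn hm ^ (u : ℤ) * al n m hn hm (toAdd k) * P n m hn hm M := by
  simp [P, T, al]

/-- The Britton-reducedness relation. -/
def R (x y : ℤˣ × Multiplicative ℤ) : Prop :=
  x.2 ∈ toSubgroup (S n) (S m) x.1 → x.1 = y.1

theorem R_one (k : Multiplicative ℤ) (y : ℤˣ × Multiplicative ℤ) :
    R n m (1, k) y ↔ (n ∣ toAdd k → y.1 = 1) := by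
  simp only [R, toSubgroup_one, mem_S, eq_comm]

theorem R_neg_one (k : Multiplicative ℤ) (y : ℤˣ × Multiplicative ℤ) :
    R n m (-1, k) y ↔ (m ∣ toAdd k → y.1 = -1) := by
  simp only [R, toSubgroup_neg_one, mem_S, eq_comm]

/-- Elements with a reduced form `t⁻¹ ... t`. -/
def Good (x : H n m hn hm) (k : ℕ) : Prop :=
  ∃ (p : Multiplicative ℤ) (L : List (ℤˣ × Multiplicative ℤ)),
    List.IsChain (R n m) (((-1, p) :: L) ++ [(1, 1)]) ∧
    x = P n m hn hm (((-1, p) :: L) ++ [(1, 1)]) ∧ L.length = k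

theorem Good.unique {x : H n m hn hm} {k l : ℕ} (h1 : Good n m hn hm x k)
    (h2 : Good n m hn hm x l) : k = l := by
  obtain ⟨p, L, hc, hx, rfl⟩ := h1
  obtain ⟨q, M, hd, hy, rfl⟩ := h2
  have := (ReducedWord.map_fst_eq_and_of_prod_eq (phi n m hn hm)
    (w₁ := ⟨1, _, hc⟩) (w₂ := ⟨1, _, hd⟩) (by
      simp only [ReducedWord.prod, map_one, one_mul]
      exact hx.symm.trans hy)).1
  have := congrArg List.length this
  simpa using this

theorem chain_last {α : Type*} (r : α → α → Prop) (L : List α) (x y : α)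
    (h : List.IsChain r (L ++ [x])) (hxy : ∀ z, r z x → r z y) :
    List.IsChain r (L ++ [y]) := by
  rw [List.isChain_append] at h ⊢
  refine ⟨h.1, by simp, ?_⟩
  intro a ha b hb
  simp at hb
  subst hb
  exact hxy _ (h.2.2 a ha x (by simp))

/-- The conjugator. -/
noncomputable def w (y s : ℤ) : H n m hn hm :=
  (T n m hn hm)⁻¹ * al n m hn hm y * T n m hn hm * al n m hn hm s

theorem not_dvd_one (k : ℤ) (h : 2 ≤ |k|) : ¬ k ∣ 1 := by
  intro hk
  have := Int.le_of_dvd one_pos ((abs_dvd _ _).2 hk)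
  omega

/-- Conjugation of a reduced word with at least one stable letter. -/
theorem good_step (hn2 : 2 ≤ |n|) (hm2 : 2 ≤ |m|) (e f : ℤˣ) (h : ℤ)
    (g : Multiplicative ℤ) (L : List (ℤˣ × Multiplicative ℤ)) (s : ℤ)
    (hL : List.IsChain (R n m) (L ++ [(f, g)]))
    (he : ∀ z ∈ (L ++ [(f, g)]).head?, z.1 = e)
    (h1 : e = 1 ∨ ¬ n ∣ s + h) (h2 : f = -1 ∨ ¬ n ∣ toAdd g - s) :
    Good n m hn hm (w n m hn hm 1 s * (al n m hn hm h * P n m hn hm (L ++ [(f, g)])) *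
      (w n m hn hm 1 s)⁻¹) (L.length + 3) := by
  refine ⟨ofAdd 1, (1, ofAdd (s + h)) :: L ++ [(f, ofAdd (toAdd g - s)), (-1, ofAdd (-1))],
    ?_, ?_, by simp⟩
  · have hL2 : List.IsChain (R n m) (L ++ [(f, ofAdd (toAdd g - s))]) :=
      chain_last _ _ _ _ hL (fun z hz => hz)
    have hm1 : ¬ m ∣ 1 := not_dvd_one m hm2
    have e1 : (((-1, ofAdd 1) :: ((1, ofAdd (s + h)) :: L ++
        [(f, ofAdd (toAdd g - s)), (-1, ofAdd (-1))])) ++ [(1, 1)] :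
        List (ℤˣ × Multiplicative ℤ)) =
      (-1, ofAdd 1) :: (1, ofAdd (s + h)) :: ((L ++ [(f, ofAdd (toAdd g - s))]) ++
        [(-1, ofAdd (-1)), (1, 1)]) := by simp
    rw [e1, List.isChain_cons, List.isChain_cons]
    refine ⟨?_, ?_, ?_⟩
    · intro z _
      rw [R_neg_one]
      exact fun hh => absurd hh hm1
    · intro z hz
      rw [R_one]
      intro hd
      have hz1 : z.1 = e := by
        cases L with
        | nil => 
          simp at hz he
          subst hz
          exact he
        | cons c L =>
          simp at hz he
          subst hz
          exact he
      rw [hz1]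
      exact h1.resolve_right (fun hh => hh hd)
    · rw [List.isChain_append]
      refine ⟨hL2, ?_, ?_⟩
      · rw [List.isChain_pair, R_neg_one]
        intro hh
        exact absurd hh (by simpa using hm1)
      · intro z hz y hy
        simp at hz hy
        subst hz hy
        rcases Int.units_eq_one_or f with rfl | rfl
        · rw [R_one]
          intro hd
          exact absurd hd (h2.resolve_left (by decide))
        · rw [R_neg_one]
          intro _
          rfl
  · simp [P_append, P_cons, P_nil, w, al_add, al_neg, al_zero, sub_eq_add_neg, mul_assoc]

theorem Good.step (hn2 : 2 ≤ |n|) (hm2 : 2 ≤ |m|) {x : H n m hn hm} {k : ℕ}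
    (hx : Good n m hn hm x k) :
    Good n m hn hm (w n m hn hm 1 1 * x * (w n m hn hm 1 1)⁻¹) (k + 4) := by
  obtain ⟨p, L, hc, rfl, rfl⟩ := hx
  have := good_step n m hn hm hn2 hm2 (-1) 1 0 1 ((-1, p) :: L) 1 hc (by simp)
    (Or.inr (by simpa using not_dvd_one n hn2)) (Or.inr (by simpa using not_dvd_one n hn2))
  rw [al_zero, one_mul] at this
  exact this

/-- Every element is represented by a reduced word. -/
theorem exists_reduced (x : H n m hn hm) : ∃ (h : ℤ) (L : List (ℤˣ × Multiplicative ℤ)),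
    List.IsChain (R n m) L ∧ x = al n m hn hm h * P n m hn hm L := by
  obtain ⟨d⟩ := TransversalPair.nonempty (Multiplicative ℤ) (S n) (S m)
  refine ⟨toAdd (equiv (phi n m hn hm) d x).head, (equiv (phi n m hn hm) d x).toList,
    (equiv (phi n m hn hm) d x).chain, ?_⟩
  exact ((equiv (phi n m hn hm) d).symm_apply_apply x).symm

theorem exists_good (hn2 : 2 ≤ |n|) (hm2 : 3 ≤ |m|) (x : H n m hn hm)
    (hx : ∀ k, x ≠ al n m hn hm (n * k)) : ∃ y s k,
      Good n m hn hm (w n m hn hm y s * x * (w n m hn hm y s)⁻¹) k := by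
  have hn1 : ¬ n ∣ 1 := not_dvd_one n hn2
  have hm1 : ¬ m ∣ 1 := not_dvd_one m (by omega)
  obtain ⟨h, L, hL, rfl⟩ := exists_reduced n m hn hm x
  rcases List.eq_nil_or_concat' L with rfl | ⟨L, ⟨f, g⟩, rfl⟩
  · have hnh : ¬ n ∣ h := by
      rintro ⟨k, rfl⟩
      exact hx k (by simp [P_nil])
    refine ⟨1, 0, _, ofAdd 1, [(1, ofAdd h), (-1, ofAdd (-1))], ?_, ?_, rfl⟩
    · simp [R_one, R_neg_one, hm1, hnh]
    · simp [P_cons, P_nil, w, al_add, al_neg, al_zero, mul_assoc]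
  · rcases Int.units_eq_one_or f with rfl | rfl
    swap
    · obtain ⟨e, he⟩ : ∃ e, ∀ z ∈ (L ++ [(-1, g)]).head?, z.1 = e := by
        cases L <;> simp
      exact ⟨1, 1 - h, _, good_step n m hn hm hn2 (by omega) e (-1) h g L (1 - h) hL he
        (Or.inr (by simpa using hn1)) (Or.inl rfl)⟩
    cases L with
    | nil =>
      exact ⟨1, toAdd g - 1, _, good_step n m hn hm hn2 (by omega) 1 1 h g [] (toAdd g - 1) hL
        (by simp) (Or.inl rfl) (Or.inr (by simpa using hn1))⟩
    | cons c L =>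
      obtain ⟨e, p⟩ := c
      rcases Int.units_eq_one_or e with rfl | rfl
      · exact ⟨1, toAdd g - 1, _, good_step n m hn hm hn2 (by omega) 1 1 h g _ (toAdd g - 1) hL
          (by simp) (Or.inl rfl) (Or.inr (by simpa using hn1))⟩
      by_cases hd : n ∣ toAdd g + h
      · refine ⟨1, 1 - h, _, good_step n m hn hm hn2 (by omega) (-1) 1 h g _ (1 - h) hL
          (by simp) (Or.inr (by simpa using hn1)) (Or.inr ?_)⟩
        intro h3
        apply hn1
        have := dvd_sub hd h3
        ring_nf at this
        exact this
      · obtain ⟨y, hy1, hy2⟩ : ∃ y, ¬ m ∣ y ∧ ¬ m ∣ y + toAdd p := by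
          by_cases h3 : m ∣ 1 + toAdd p
          · refine ⟨2, ?_, ?_⟩
            · intro hk
              have := Int.le_of_dvd two_pos ((abs_dvd _ _).2 hk)
              omega
            · intro h4
              apply hm1
              have := dvd_sub h4 h3
              ring_nf at this
              exact this
          · exact ⟨1, hm1, h3⟩
        refine ⟨y, -h, _, ofAdd (y + toAdd p), L ++ [(1, ofAdd (toAdd g + h)), (-1, ofAdd (-y))],
          ?_, ?_, rfl⟩
        · have e1 : (((-1, ofAdd (y + toAdd p)) ::
              (L ++ [(1, ofAdd (toAdd g + h)), (-1, ofAdd (-y))])) ++ [(1, 1)] :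
              List (ℤˣ × Multiplicative ℤ)) =
              (-1, ofAdd (y + toAdd p)) :: ((L ++ [(1, ofAdd (toAdd g + h))]) ++
              [(-1, ofAdd (-y)), (1, 1)]) := by simp
          rw [e1, List.isChain_cons]
          rw [List.cons_append, List.isChain_cons] at hL
          refine ⟨?_, ?_⟩
          · intro z _
            rw [R_neg_one]
            exact fun hh => absurd hh hy2
          · rw [List.isChain_append]
            refine ⟨chain_last _ _ _ _ hL.2 (fun z hz => hz), ?_, ?_⟩
            · rw [List.isChain_pair, R_neg_one]
              intro hh
              exact absurd hh (by simpa using hy1)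
            · intro z hz y hy
              simp at hz hy
              subst hz hy
              rw [R_one]
              intro hh
              exact absurd hh hd
        · simp [P_append, P_cons, P_nil, w, al_add, al_neg, al_zero, mul_assoc]

theorem al_rel : T n m hn hm * al n m hn hm 1 ^ n * (T n m hn hm)⁻¹ *
    al n m hn hm 1 ^ (-m) = 1 := by
  have h : (ofAdd (1 : ℤ)) ^ n ∈ S n := ⟨ofAdd 1, rfl⟩
  have := HNNExtension.equiv_eq_conj (φ := phi n m hn hm) ⟨_, h⟩
  rw [phi_apply] at this
  simp only [map_zpow] at this
  rw [zpow_neg, mul_inv_eq_one]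
  exact this.symm

/-- The map from `BS` to the HNN extension. -/
noncomputable def F : BS n m →* H n m hn hm :=
  PresentedGroup.toGroup (f := fun c => if c then T n m hn hm else al n m hn hm 1) (by
    intro r hr
    rw [BSRels, Set.mem_singleton_iff] at hr
    subst hr
    simpa using al_rel n m hn hm)

theorem F_a : F n m hn hm (BS.a n m) = al n m hn hm 1 := by
  simp [F, BS.a]

theorem F_b : F n m hn hm (BS.b n m) = T n m hn hm := by
  simp [F, BS.b]

theorem BS_rel : BS.b n m * BS.a n m ^ n = BS.a n m ^ m * BS.b n m := by
  have : (PresentedGroup.mk (BSRels n m)) (FreeGroup.of true * FreeGroup.of false ^ n *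
      (FreeGroup.of true)⁻¹ * FreeGroup.of false ^ (-m)) = 1 :=
    PresentedGroup.one_of_mem (by simp [BSRels])
  simp only [map_mul, map_zpow, map_inv, zpow_neg] at this
  rw [mul_inv_eq_one, mul_inv_eq_iff_eq_mul] at this
  exact this

theorem F_inj : Function.Injective (F n m hn hm) := by
  let K : H n m hn hm →* BS n m := HNNExtension.lift (zpowersHom _ (BS.a n m)) (BS.b n m) (by
    rintro ⟨_, y, rfl⟩
    have := phi_apply n m hn hm y ⟨y, rfl⟩
    change _ * (zpowersHom _ (BS.a n m)) (y ^ n) =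
      (zpowersHom _ (BS.a n m)) (phi n m hn hm ⟨y ^ n, _⟩ : Multiplicative ℤ) * _
    rw [this]
    have h2 : SemiconjBy (BS.b n m) (BS.a n m ^ n) (BS.a n m ^ m) := BS_rel n m
    have h3 := h2.zpow_right (toAdd y)
    simp only [zpowersHom_apply, toAdd_zpow, smul_eq_mul, zpow_mul]
    exact h3)
  have hK : K.comp (F n m hn hm) = MonoidHom.id _ := by
    apply PresentedGroup.ext
    intro c
    cases c
    · change K (F n m hn hm (BS.a n m)) = BS.a n m
      rw [F_a]
      simp [K, al]
    · change K (F n m hn hm (BS.b n m)) = BS.b n m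
      rw [F_b]
      simp [K, T]
  intro x y h
  have := congrArg K h
  rw [← MonoidHom.comp_apply, ← MonoidHom.comp_apply, hK] at this
  exact this

end

end BSProof

open BSProof in
/-- For `2 ≤ n < |m|` and `G = ⟨a, b⁻¹ a b⟩ ≤ BS(n,m)`, every `γ ∈ BS(n,m)` lying outside
`{a^{nk} : k ∈ ℤ}` has infinitely many conjugates `g γ g⁻¹` with `g ∈ G`. -/
theorem BS_conjugates_infinite (n m : ℤ) (h1 : 2 ≤ n) (h2 : n < |m|)
    (γ : BS n m) (hγ : γ ∉ Subgroup.zpowers (BS.a n m ^ n)) :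
    {x : BS n m |
      ∃ g ∈ Subgroup.closure {BS.a n m, (BS.b n m)⁻¹ * BS.a n m * BS.b n m},
        x = g * γ * g⁻¹}.Infinite := by
  have hn : n ≠ 0 := by omega
  have hm : m ≠ 0 := by
    rintro rfl
    simp at h2
    omega
  have hn2 : 2 ≤ |n| := h1.trans (le_abs_self n)
  have hm3 : 3 ≤ |m| := by omega
  obtain ⟨y, s, k, hk⟩ := exists_good n m hn hm hn2 hm3 (F n m hn hm γ) (by
    intro k hk
    apply hγ
    refine ⟨k, ?_⟩
    apply F_inj n m hn hm
    rw [hk]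
    simp only [map_zpow, F_a, al_zpow]
    congr 1
    ring)
  let v : ℤ → ℤ → BS n m := fun y s =>
    (BS.b n m)⁻¹ * BS.a n m ^ y * BS.b n m * BS.a n m ^ s
  have hv : ∀ y s, F n m hn hm (v y s) = w n m hn hm y s := by
    intro y s
    simp [v, w, F_a, F_b, al_zpow]
  have hvm : ∀ y s, v y s ∈
      Subgroup.closure {BS.a n m, (BS.b n m)⁻¹ * BS.a n m * BS.b n m} := by
    intro y s
    refine mul_mem ?_ (zpow_mem (Subgroup.subset_closure (by simp)) _)
    have : (BS.b n m)⁻¹ * BS.a n m ^ y * BS.b n m =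
        ((BS.b n m)⁻¹ * BS.a n m * BS.b n m) ^ y := by
      have := conj_zpow (i := y) (a := (BS.b n m)⁻¹) (b := BS.a n m)
      rw [inv_inv] at this
      exact this.symm
    rw [this]
    exact zpow_mem (Subgroup.subset_closure (by simp)) _
  let q : ℕ → BS n m := fun j => (v 1 1 ^ j * v y s) * γ * (v 1 1 ^ j * v y s)⁻¹
  have hq : ∀ j, Good n m hn hm (F n m hn hm (q j)) (k + 4 * j) := by
    intro j
    induction j with
    | zero => simpa [q, hv, mul_assoc] using hk
    | succ j ih =>
      have := ih.step n m hn hm hn2 (by omega)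
      have e : F n m hn hm (q (j + 1)) =
          w n m hn hm 1 1 * F n m hn hm (q j) * (w n m hn hm 1 1)⁻¹ := by
        simp [q, hv, mul_assoc, pow_succ']
      rw [e]
      exact this
  refine Set.infinite_of_injective_forall_mem (f := q) ?_ ?_
  · intro i j hij
    have hi := hq i
    rw [hij] at hi
    have := Good.unique n m hn hm hi (hq j)
    omega
  · intro j
    exact ⟨_, mul_mem (pow_mem (hvm _ _) _) (hvm _ _), rfl⟩
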